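/- The connective constant of self-osculating walks on the square lattice satisfies the upper bound limsup_{n→∞} (c_n)^{1/n} ≤ 2.73911. -/

import Mathlib

open Filter

/-- A step is one of the `2d` signed standard unit vectors of `ℤ^d`. -/
def unitStep (d : ℕ) (s : Fin d → ℤ) : Prop :=
  ∃ i : Fin d, s = Pi.single i 1 ∨ s = Pi.single i (-1)

/-- A walk of length `n` on `ℤ^d` starting at the origin. -/
def IsWalk (d n : ℕ) (w : Fin (n + 1) → Fin d → ℤ) : Prop :=
  w 0 = 0 ∧ ∀ j : Fin n, unitStep d (w j.succ - w j.castSucc)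

/-- A self-osculating walk on the square lattice: a walk in which no lattice edge is
traversed twice, and whenever an interior vertex of the walk is visited at some other
time of the walk, the incoming and outgoing steps at that vertex are perpendicular. -/
def IsSOW (n : ℕ) (w : Fin (n + 1) → Fin 2 → ℤ) : Prop :=
  IsWalk 2 n w ∧
  (∀ j j' : Fin n, j ≠ j' →
    s(w j.castSucc, w j.succ) ≠ s(w j'.castSucc, w j'.succ)) ∧
  (∀ j : ℕ, ∀ hj0 : 0 < j, ∀ hjn : j < n,
    (∃ j' : Fin (n + 1), (j' : ℕ) ≠ j ∧ w j' = w ⟨j, by omega⟩) →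
    ∑ i : Fin 2,
      (w ⟨j, by omega⟩ - w ⟨j - 1, by omega⟩) i *
        (w ⟨j + 1, by omega⟩ - w ⟨j, by omega⟩) i = 0)

/-- The number of self-osculating walks of length `n` on the square lattice
starting at the origin. -/
noncomputable def sowCount (n : ℕ) : ℕ :=
  Nat.card {w : Fin (n + 1) → Fin 2 → ℤ // IsSOW n w}

/-!
Walks are encoded by their turns and grow backwards, by a turn `t` put in front of a word `w`. Their
number grows at most like `μ ^ n` if some weight with `1 ≤ V w` satisfies
`∑ t, V (t :: w) ≤ μ * V w` on the words of self-osculating walks. Such a `V` with `μ = 2.73911`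
exists that depends only on the first 16 turns of `w`, up to mirroring. It is computed by power
iteration, in truncated arithmetic about which nothing needs to be proved: the inequality itself is
checked for every word of 16 turns, except for words that a simulation of the walk shows to be
impossible. So all that has to be known of the simulation is that it rejects no turn word of a
self-osculating walk.
-/

section Growth

open scoped Topology

lemma limsup_rpow_one_div_le {c : ℕ → ℝ} {C μ : ℝ} (hc : ∀ n, 0 ≤ c n) (hC : 0 < C) (hμ : 0 ≤ μ)
    (h : ∀ᶠ n in atTop, c n ≤ C * μ ^ n) :
    limsup (fun n : ℕ => c n ^ (1 / (n : ℝ))) atTop ≤ μ := by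
  have root_bound : ∀ᶠ n : ℕ in atTop, c n ^ (1 / (n : ℝ)) ≤ C ^ (1 / (n : ℝ)) * μ := by
    filter_upwards [h, eventually_ne_atTop 0] with n hn hn0
    calc c n ^ (1 / (n : ℝ)) ≤ (C * μ ^ n) ^ (1 / (n : ℝ)) :=
          Real.rpow_le_rpow (hc n) hn (by positivity)
      _ = C ^ (1 / (n : ℝ)) * μ := by
          rw [Real.mul_rpow hC.le (by positivity), one_div, Real.pow_rpow_inv_natCast hμ hn0]
  have bound_tendsto : Tendsto (fun n : ℕ => C ^ (1 / (n : ℝ)) * μ) atTop (𝓝 μ) := by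
    simpa using ((Real.continuous_const_rpow hC.ne').tendsto 0 |>.comp
      tendsto_one_div_atTop_nhds_zero_nat).mul_const μ
  rw [← bound_tendsto.limsup_eq]
  exact limsup_le_limsup root_bound
    (IsCoboundedUnder.of_frequently_ge <| Frequently.of_forall fun n =>
      Real.rpow_nonneg (hc n) _)
    bound_tendsto.isBoundedUnder_le

variable {α : Type*} [Fintype α] {L : Set (List α)} {V : List α → ℝ} {μ : ℝ}

/-- The total weight of the words of length `n` in a language. -/
noncomputable def levelWeight (L : Set (List α)) (V : List α → ℝ) (n : ℕ) : ℝ :=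
  ∑ u : Fin n → α, L.indicator V (List.ofFn u)

lemma levelWeight_succ_le {n : ℕ} (tail_mem : ∀ t w, t :: w ∈ L → w ∈ L)
    (h : ∀ w ∈ L, w.length = n → ∑ t, L.indicator V (t :: w) ≤ μ * V w) :
    levelWeight L V (n + 1) ≤ μ * levelWeight L V n := by
  classical
  calc levelWeight L V (n + 1)
      = ∑ p : α × (Fin n → α), L.indicator V (p.1 :: List.ofFn p.2) :=
        Fintype.sum_equiv (Fin.consEquiv fun _ => α).symm _ _ fun u => by
          rw [List.ofFn_succ]; rfl
    _ = ∑ u : Fin n → α, ∑ t, L.indicator V (t :: List.ofFn u) := by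
        rw [Fintype.sum_prod_type, Finset.sum_comm]
    _ ≤ ∑ u : Fin n → α, μ * L.indicator V (List.ofFn u) := by
        refine Finset.sum_le_sum fun u _ => ?_
        by_cases hu : List.ofFn u ∈ L
        · rw [Set.indicator_of_mem hu]
          exact h _ hu List.length_ofFn
        · rw [Set.indicator_of_notMem hu, mul_zero]
          exact (Finset.sum_eq_zero fun t _ =>
            Set.indicator_of_notMem (fun ht => hu (tail_mem t _ ht)) V).le
    _ = μ * levelWeight L V n := (Finset.mul_sum ..).symm

lemma card_le_levelWeight {n : ℕ} (one_le : ∀ w ∈ L, w.length = n → 1 ≤ V w) :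
    (Nat.card {u : Fin n → α // List.ofFn u ∈ L} : ℝ) ≤ levelWeight L V n := by
  classical
  rw [Nat.card_eq_fintype_card, Fintype.card_subtype, ← Finset.sum_boole]
  refine Finset.sum_le_sum fun u _ => ?_
  by_cases hu : List.ofFn u ∈ L
  · simpa [hu] using one_le _ hu List.length_ofFn
  · simp [hu]

lemma exists_card_le_mul_pow {k : ℕ} (hμ : 0 < μ) (tail_mem : ∀ t w, t :: w ∈ L → w ∈ L)
    (one_le : ∀ w ∈ L, k ≤ w.length → 1 ≤ V w)
    (h : ∀ w ∈ L, k ≤ w.length → ∑ t, L.indicator V (t :: w) ≤ μ * V w) :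
    ∃ C > 0, ∀ n ≥ k, (Nat.card {u : Fin n → α // List.ofFn u ∈ L} : ℝ) ≤ C * μ ^ n := by
  refine ⟨max 1 (levelWeight L V k / μ ^ k), by positivity, fun n hn =>
    (card_le_levelWeight fun w hw hwn => one_le w hw (hwn ▸ hn)).trans ?_⟩
  induction n, hn using Nat.le_induction with
  | base => exact (div_le_iff₀ (by positivity)).mp (le_max_right ..)
  | succ n hn ih =>
    calc levelWeight L V (n + 1) ≤ μ * levelWeight L V n :=
          levelWeight_succ_le tail_mem fun w hw hwn => h w hw (hwn ▸ hn)
      _ ≤ μ * (max 1 (levelWeight L V k / μ ^ k) * μ ^ n) := by gcongr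
      _ = max 1 (levelWeight L V k / μ ^ k) * μ ^ (n + 1) := by ring

end Growth

section Words

/-- The possible turns of a walk at a vertex; reversals are excluded. -/
inductive Turn | left | straight | right
  deriving DecidableEq

instance : Fintype Turn := ⟨{.left, .straight, .right}, by rintro ⟨⟩ <;> decide⟩

/-- The compass directions. -/
inductive Dir | e | n | w | s
  deriving DecidableEq

instance : Fintype Dir := ⟨{.e, .n, .w, .s}, by rintro ⟨⟩ <;> decide⟩

namespace Turn

/-- The effect of a reflection of the lattice on a turn. -/
def mirror : Turn → Turn
  | left => right
  | straight => straight
  | right => left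

/-- The quarter turn as a factor: a step `s` followed by the turn `t` continues with the step
`t.unit * s`. -/
def unit : Turn → GaussianInt
  | left => ⟨0, 1⟩
  | straight => 1
  | right => ⟨0, -1⟩

lemma unit_mirror (t : Turn) : t.mirror.unit = star t.unit := by
  cases t <;> rfl

lemma mirror_involutive : Function.Involutive mirror := fun t => by
  cases t <;> rfl

end Turn

namespace Dir

/-- The step in a direction. -/
def unit : Dir → GaussianInt
  | e => 1
  | n => ⟨0, 1⟩
  | w => -1
  | s => ⟨0, -1⟩

/-- The heading after a turn. -/
def turn : Dir → Turn → Dir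
  | d, .straight => d
  | e, .left | w, .right => n
  | n, .left | s, .right => w
  | w, .left | e, .right => s
  | s, .left | n, .right => e

lemma unit_turn (d : Dir) (t : Turn) : (d.turn t).unit = t.unit * d.unit := by
  cases d <;> cases t <;> rfl

lemma exists_turn_eq {d d' : Dir} (h : d'.unit ≠ -d.unit) : ∃ t, d.turn t = d' := by
  revert d d'
  decide

lemma dot_eq_one (d : Dir) : d.unit.re * d.unit.re + d.unit.im * d.unit.im = 1 := by
  cases d <;> rfl

end Dir

/-- Self-osculation for the first `n` steps of a sequence of Gaussian integers, which stand for the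
points of the square lattice. -/
structure Osculating (n : ℕ) (z : ℕ → GaussianInt) : Prop where
  edge_ne : ∀ {i j}, i < j → j < n → s(z i, z (i + 1)) ≠ s(z j, z (j + 1))
  eq_of_straight : ∀ {i j}, 0 < j → j < n → z (j + 1) - z j = z j - z (j - 1) → i ≤ n →
    z i = z j → i = j

/-- From time `j` on, the sequence `z` takes the turns spelled by a word. -/
def Follows (z : ℕ → GaussianInt) (j : ℕ) (w : List Turn) : Prop :=
  ∀ i (h : i < w.length), z (j + i + 2) - z (j + i + 1) = w[i].unit * (z (j + i + 1) - z (j + i))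

/-- The turn words of self-osculating walks, the first turn being the head of the word. -/
def osculatingWords : Set (List Turn) :=
  {w | ∃ z, Follows z 0 w ∧ Osculating (w.length + 1) z}

variable {n j : ℕ} {z z' : ℕ → GaussianInt} {t : Turn} {w : List Turn}

lemma Follows.head (h : Follows z j (t :: w)) :
    z (j + 2) - z (j + 1) = t.unit * (z (j + 1) - z j) :=
  h 0 (by simp)

lemma Follows.tail (h : Follows z j (t :: w)) : Follows z (j + 1) w := fun i hi => by
  rw [add_right_comm j 1 i]
  exact h (i + 1) (by simpa using hi)

lemma Follows.comp_succ (h : Follows z 1 w) : Follows (fun i => z (i + 1)) 0 w := fun i hi => by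
  have step := h i hi
  rw [add_comm 1 i] at step
  simpa only [zero_add] using step

lemma Follows.eq_of_le (h : Follows z 0 w) (h' : Follows z' 0 w) (h₀ : z 0 = z' 0)
    (h₁ : z 1 = z' 1) : ∀ i ≤ w.length + 1, z i = z' i
  | 0, _ => h₀
  | 1, _ => h₁
  | i + 2, hi => by
    have step := h i (by omega)
    have step' := h' i (by omega)
    simp only [zero_add] at step step'
    rw [← sub_add_cancel (z (i + 2)) (z (i + 1)), ← sub_add_cancel (z' (i + 2)) (z' (i + 1)),
      step, step', h.eq_of_le h' h₀ h₁ i (by omega), h.eq_of_le h' h₀ h₁ (i + 1) (by omega)]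

lemma Osculating.comp_succ (h : Osculating (n + 1) z) : Osculating n fun i => z (i + 1) where
  edge_ne hij hj := h.edge_ne (by omega) (by omega)
  eq_of_straight {i j} h0 hj straight hi eq := by
    have prev : j - 1 + 1 = j + 1 - 1 := by omega
    simp only [prev] at straight
    exact Nat.succ_injective <| h.eq_of_straight (by omega) (by omega) straight (by omega) eq

lemma Osculating.star (h : Osculating n z) : Osculating n fun i => star (z i) where
  edge_ne hij hj heq := h.edge_ne hij hj <| Sym2.map.injective star_injective <| by
    simpa only [Sym2.map_mk] using heq
  eq_of_straight h0 hj straight hi eq := h.eq_of_straight h0 hj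
    (star_injective <| by simpa only [star_sub] using straight) hi (star_injective eq)

lemma Follows.star (h : Follows z j w) :
    Follows (fun i => star (z i)) j (w.map Turn.mirror) := fun i hi => by
  rw [List.getElem_map, Turn.unit_mirror, ← star_sub, ← star_sub, ← star_mul',
    h i (by simpa using hi)]

lemma tail_mem_osculatingWords (h : t :: w ∈ osculatingWords) : w ∈ osculatingWords := by
  obtain ⟨z, follows, osculating⟩ := h
  exact ⟨_, follows.tail.comp_succ, osculating.comp_succ⟩

lemma map_mirror_mem_osculatingWords (h : w ∈ osculatingWords) :
    w.map Turn.mirror ∈ osculatingWords := by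
  obtain ⟨z, follows, osculating⟩ := h
  exact ⟨_, follows.star, by simpa only [List.length_map] using osculating.star⟩

end Words

section Counting

/-- A lattice walk as a sequence of Gaussian integers; the values after its end are irrelevant. -/
def gaussianPath {n : ℕ} (v : Fin (n + 1) → Fin 2 → ℤ) (j : ℕ) : GaussianInt :=
  ⟨v (Fin.ofNat (n + 1) j) 0, v (Fin.ofNat (n + 1) j) 1⟩

variable {n : ℕ} {v v' : Fin (n + 1) → Fin 2 → ℤ} {z : ℕ → GaussianInt}

lemma gaussianPath_of_lt {j : ℕ} (hj : j < n + 1) :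
    gaussianPath v j = ⟨v ⟨j, hj⟩ 0, v ⟨j, hj⟩ 1⟩ := by
  rw [gaussianPath, show Fin.ofNat (n + 1) j = ⟨j, hj⟩ from Fin.ext (Nat.mod_eq_of_lt hj)]

lemma gaussianPath_eq_iff {i j : ℕ} (hi : i < n + 1) (hj : j < n + 1) :
    gaussianPath v i = gaussianPath v' j ↔ v ⟨i, hi⟩ = v' ⟨j, hj⟩ := by
  rw [gaussianPath_of_lt hi, gaussianPath_of_lt hj, Zsqrtd.ext_iff, funext_iff, Fin.forall_fin_two]

lemma exists_dir_eq_of_unitStep {s : Fin 2 → ℤ} (hs : unitStep 2 s) :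
    ∃ d : Dir, d.unit = ⟨s 0, s 1⟩ := by
  obtain ⟨i, rfl | rfl⟩ := hs <;> fin_cases i
  exacts [⟨.e, rfl⟩, ⟨.n, rfl⟩, ⟨.w, rfl⟩, ⟨.s, rfl⟩]

lemma IsWalk.gaussianPath_zero (h : IsWalk 2 n v) : gaussianPath v 0 = 0 := by
  rw [gaussianPath, Fin.ofNat_zero, h.1]
  rfl

lemma IsWalk.exists_dir (h : IsWalk 2 n v) {j : ℕ} (hj : j < n) :
    ∃ d : Dir, d.unit = gaussianPath v (j + 1) - gaussianPath v j := by
  rw [gaussianPath_of_lt (by omega), gaussianPath_of_lt (by omega)]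
  exact exists_dir_eq_of_unitStep (h.2 ⟨j, hj⟩)

lemma IsSOW.osculating (h : IsSOW n v) : Osculating n (gaussianPath v) where
  edge_ne {i j} hij hj heq := by
    refine h.2.1 ⟨i, hij.trans hj⟩ ⟨j, hj⟩ (by simpa using hij.ne) ?_
    rw [Sym2.eq_iff] at heq ⊢
    refine heq.imp (fun h => ⟨?_, ?_⟩) (fun h => ⟨?_, ?_⟩)
    exacts [(gaussianPath_eq_iff _ _).mp h.1, (gaussianPath_eq_iff _ _).mp h.2,
      (gaussianPath_eq_iff _ _).mp h.1, (gaussianPath_eq_iff _ _).mp h.2]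
  eq_of_straight {i j} h0 hj straight hi heq := by
    by_contra hij
    have perpendicular := h.2.2 j h0 hj
      ⟨⟨i, by omega⟩, hij, (gaussianPath_eq_iff (by omega) (by omega)).mp heq⟩
    obtain ⟨d, hd⟩ := h.1.exists_dir hj
    have unit_dot := d.dot_eq_one
    rw [gaussianPath_of_lt (by omega), gaussianPath_of_lt (by omega)] at hd
    rw [gaussianPath_of_lt (by omega), gaussianPath_of_lt (by omega),
      gaussianPath_of_lt (by omega)] at straight
    obtain ⟨same_re, same_im⟩ := Zsqrtd.ext_iff.mp straight
    simp only [hd, Zsqrtd.re_sub, Zsqrtd.im_sub] at unit_dot same_re same_im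
    simp only [Fin.sum_univ_two, Pi.sub_apply, ← same_re, ← same_im] at perpendicular
    exact zero_ne_one (perpendicular.symm.trans unit_dot)

lemma exists_follows (hdir : ∀ j < n + 1, ∃ d : Dir, d.unit = z (j + 1) - z j)
    (hz : Osculating (n + 1) z) : ∃ u : Fin n → Turn, Follows z 0 (List.ofFn u) := by
  have exists_turn (j : Fin n) :
      ∃ t : Turn, z (j + 2) - z (j + 1) = t.unit * (z (j + 1) - z j) := by
    obtain ⟨d, hd⟩ := hdir j (by omega)
    obtain ⟨d', hd'⟩ := hdir (j + 1) (by omega)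
    have no_backtrack : d'.unit ≠ -d.unit := fun back =>
      hz.edge_ne (Nat.lt_add_one (j : ℕ)) (by omega) <| Sym2.eq_iff.mpr <| .inr
        ⟨by linear_combination hd + hd' - back, rfl⟩
    obtain ⟨t, rfl⟩ := Dir.exists_turn_eq no_backtrack
    exact ⟨t, by rw [← hd', ← hd, Dir.unit_turn]⟩
  choose u hu using exists_turn
  exact ⟨u, fun i hi => by simpa using hu ⟨i, by simpa using hi⟩⟩

lemma IsSOW.exists_code {v : Fin (n + 2) → Fin 2 → ℤ} (h : IsSOW (n + 1) v) :
    ∃ c : Dir × {u : Fin n → Turn // List.ofFn u ∈ osculatingWords},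
      gaussianPath v 1 = c.1.unit ∧ Follows (gaussianPath v) 0 (List.ofFn c.2.1) := by
  obtain ⟨d, hd⟩ := h.1.exists_dir n.succ_pos
  obtain ⟨u, hu⟩ := exists_follows (fun _ => h.1.exists_dir) h.osculating
  exact ⟨⟨d, u, _, hu, by simpa using h.osculating⟩, by simp [hd, h.1.gaussianPath_zero], hu⟩

theorem sowCount_succ_le (n : ℕ) :
    sowCount (n + 1) ≤ 4 * Nat.card {u : Fin n → Turn // List.ofFn u ∈ osculatingWords} := by
  choose code first_step follows using
    fun v : {v : Fin (n + 2) → Fin 2 → ℤ // IsSOW (n + 1) v} => v.2.exists_code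
  have code_injective : Function.Injective code := fun v v' heq => by
    have agree := (follows v).eq_of_le (heq ▸ follows v')
      (by rw [v.2.1.gaussianPath_zero, v'.2.1.gaussianPath_zero])
      (by rw [first_step, first_step, heq])
    exact Subtype.ext <| funext fun i => (gaussianPath_eq_iff i.2 i.2).mp <| agree i <| by
      simpa using i.is_le
  calc sowCount (n + 1) ≤ Nat.card (Dir × _) := Nat.card_le_card_of_injective code code_injective
    _ = 4 * _ := by rw [Nat.card_prod, Nat.card_eq_fintype_card]; rfl

end Counting

section Tries

lemma natRec_eq_or {A : Type} (x y : A) (n : ℕ) :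
    (Nat.rec x (fun _ _ => y) n : A) = x ∨ (Nat.rec x (fun _ _ => y) n : A) = y := by
  cases n
  exacts [.inl rfl, .inr rfl]

/-- Ternary tries of natural numbers, branching over `Turn`. A leaf stands for a subtrie on which
the function is constant. The operations on tries are written with recursors and plain functions on
`ℕ` because the kernel evaluates them. -/
inductive Trie | leaf (n : ℕ) | node (l s r : Trie)

namespace Trie

/-- The trie of the words that continue with a given turn. -/
def child : Trie → Turn → Trie
  | leaf n, _ => leaf n
  | node l _ _, .left => l
  | node _ s _, .straight => s
  | node _ _ r, .right => r

/-- The number stored along a word. A leaf absorbs the rest of the word; words that end at an inner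
node have value `0`. -/
def eval : Trie → List Turn → ℕ
  | t, x :: w => (t.child x).eval w
  | leaf n, [] => n
  | node _ _ _, [] => 0

lemma eval_leaf (n : ℕ) : ∀ w, (leaf n).eval w = n
  | [] => rfl
  | _ :: w => eval_leaf n w

/-- Passes `t` to `k` in constructor form. The kernel would otherwise copy `t` unevaluated. -/
noncomputable def force (t : Trie) (k : Trie → Trie) : Trie :=
  t.rec (fun n => k (leaf n)) (fun l s r _ _ _ => k (node l s r))

/-- The constructor `node` with evaluated arguments. -/
noncomputable def mkNode (l s r : Trie) : Trie :=
  l.force fun l => s.force fun s => r.force fun r => node l s r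

/-- The constructor `leaf` with an evaluated argument. -/
noncomputable def mkLeaf (n : ℕ) : Trie := Nat.rec (leaf 0) (fun k _ => leaf (Nat.succ k)) n

/-- Passes the three children of `t` to `k`. -/
noncomputable def split {A : Type} (t : Trie) (k : Trie → Trie → Trie → A) : A :=
  t.rec (fun n => k (leaf n) (leaf n) (leaf n)) (fun l s r _ _ _ => k l s r)

lemma mkNode_eq (l s r : Trie) : mkNode l s r = node l s r := by
  cases l <;> cases s <;> cases r <;> rfl

/-- Tests whether `t` is a leaf whose number satisfies `p`. -/
noncomputable def testLeaf (t : Trie) (p : ℕ → Bool) : Bool := t.rec p fun _ _ _ _ _ _ => false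

/-- Tests the inequality of `lt_of_growthCheck` along every path of `s` that ends in a nonzero
leaf. The trie `c` is read in the mirror. -/
noncomputable def growthCheck (s : Trie) : Trie → Trie → Trie → Trie → Bool :=
  s.rec
    (fun n v a b c => Nat.rec true (fun _ _ => v.testLeaf fun v => a.testLeaf fun a =>
      b.testLeaf fun b => c.testLeaf fun c =>
        Nat.blt (Nat.mul (Nat.add (Nat.add a b) c) 100000) (Nat.mul v 273911)) n)
    (fun _ _ _ ihl ihs ihr v a b c =>
      v.split fun vl vs vr => a.split fun al as ar => b.split fun bl bs br =>
        c.split fun cl cs cr => and (ihl vl al bl cr) (and (ihs vs as bs cs) (ihr vr ar br cl)))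

lemma testLeaf_eq_true_iff {t : Trie} {p : ℕ → Bool} :
    t.testLeaf p = true ↔ ∃ n, t = leaf n ∧ p n = true := by
  cases t <;> simp [testLeaf]

lemma growthCheck_leaf_succ (n : ℕ) (v a b c : Trie) :
    growthCheck (leaf (n + 1)) v a b c = v.testLeaf fun v => a.testLeaf fun a =>
      b.testLeaf fun b => c.testLeaf fun c =>
        Nat.blt (Nat.mul (Nat.add (Nat.add a b) c) 100000) (Nat.mul v 273911) := rfl

lemma growthCheck_node (l s r v a b c : Trie) :
    growthCheck (node l s r) v a b c =
      (l.growthCheck (v.child .left) (a.child .left) (b.child .left) (c.child .right) &&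
        (s.growthCheck (v.child .straight) (a.child .straight) (b.child .straight)
            (c.child .straight) &&
          r.growthCheck (v.child .right) (a.child .right) (b.child .right) (c.child .left))) := by
  cases v <;> cases a <;> cases b <;> cases c <;> rfl

lemma lt_of_growthCheck {s v a b c : Trie} {w : List Turn} (h : growthCheck s v a b c = true)
    (hs : s.eval w ≠ 0) :
    (a.eval w + b.eval w + c.eval (w.map Turn.mirror)) * 100000 < v.eval w * 273911 := by
  induction s generalizing v a b c w with
  | leaf n =>
    rw [eval_leaf] at hs
    obtain ⟨n, rfl⟩ := Nat.exists_eq_succ_of_ne_zero hs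
    simp only [growthCheck_leaf_succ, testLeaf_eq_true_iff] at h
    obtain ⟨v, rfl, a, rfl, b, rfl, c, rfl, h⟩ := h
    simp only [eval_leaf]
    exact Nat.blt_eq.mp h
  | node l s r ihl ihs ihr =>
    rcases w with _ | ⟨t, w⟩
    · exact absurd rfl hs
    simp only [growthCheck_node, Bool.and_eq_true] at h
    cases t
    exacts [(ihl h.1 hs :), (ihs h.2.1 hs :), (ihr h.2.2 hs :)]

end Trie

/-- The mirror image of a word whose first turn off the straight line is to the right, and any other
word itself. -/
def orient : List Turn → List Turn
  | [] => []
  | .left :: w => .left :: w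
  | .straight :: w => .straight :: orient w
  | .right :: w => .left :: w.map Turn.mirror

lemma map_mirror_map_mirror (w : List Turn) : (w.map Turn.mirror).map Turn.mirror = w := by
  rw [List.map_map, Turn.mirror_involutive.comp_self, List.map_id]

lemma orient_eq_or (w : List Turn) : orient w = w ∨ orient w = w.map Turn.mirror := by
  induction w with
  | nil => exact .inl rfl
  | cons t w ih =>
    cases t with
    | left => exact .inl rfl
    | straight => exact ih.imp (congrArg _) (congrArg _)
    | right => exact .inr rfl

lemma sum_eval_orient_cons (V : Trie) (w : List Turn) :
    ∑ t, V.eval (orient (t :: w)) = (V.child .left).eval (orient w) +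
      (V.child .straight).eval (orient w) + (V.child .left).eval ((orient w).map Turn.mirror) := by
  have expand : ∑ t, V.eval (orient (t :: w)) = (V.child .left).eval w +
      ((V.child .straight).eval (orient w) + (V.child .left).eval (w.map Turn.mirror)) := rfl
  rw [expand]
  rcases orient_eq_or w with h | h
  · rw [h]
    ring
  · rw [h, map_mirror_map_mirror]
    ring

end Tries

section Conflicts

/-!
### The simulated walker

The trail of the walker is drawn on a board, a natural number that holds four bits for each cell of
a window of width 20 on the lattice. These bits record, in this order, that the walk has left the
cell, has used the edge to its east, has used the edge to its north, and has passed straight through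
the cell. With the walker at position `c`, the bits of the cell with offset `(x, y)` from it start
at index `c + 84 + 4 * (x + 20 * y)`; the constants below omit `c`.
-/

namespace Dir

/-- First bit of the cell that a step in direction `d` reaches. -/
noncomputable def target (d : Dir) : ℕ := Dir.rec 88 164 80 4 d

/-- Bit of the edge that a step in direction `d` uses. -/
noncomputable def edge (d : Dir) : ℕ := Dir.rec 85 86 81 6 d

/-- The marks that forbid a step in direction `d`: its edge has been used, or the walk has passed
straight through the cell it reaches. -/
noncomputable def turnConflicts (d : Dir) : ℕ :=
  Nat.lor (Nat.pow 2 d.edge) (Nat.pow 2 (Nat.add d.target 3))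

/-- The marks that forbid a step straight on, which must not leave a cell left before. -/
noncomputable def straightConflicts (d : Dir) : ℕ := Nat.lor d.turnConflicts (Nat.pow 2 84)

/-- The marks left by a step in direction `d` after a left or right turn. -/
noncomputable def turnMarks (d : Dir) : ℕ := Nat.lor (Nat.pow 2 d.edge) (Nat.pow 2 84)

/-- The marks left by a step straight on. -/
noncomputable def straightMarks (d : Dir) : ℕ := Nat.lor d.turnMarks (Nat.pow 2 87)

/-- Calls `f` with the headings after a left, straight and right turn. -/
noncomputable def fork (f : Dir → Dir → Dir → ℕ → ℕ → Trie) (d : Dir) : ℕ → ℕ → Trie :=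
  Dir.rec (f n e s) (f w n e) (f s w n) (f e s w) d

end Dir

/-- The trie below one turn: the leaf `0` if the step in the new direction `d` meets a forbidding
mark, and otherwise the trie `ih` of the walker after this step. -/
noncomputable def conflictBranch (ih : Dir → ℕ → ℕ → Trie) (d : Dir)
    (conflicts marks M c : ℕ) : Trie :=
  Nat.rec (ih d (Nat.lor M (Nat.shiftLeft marks c)) (Nat.sub (Nat.add c d.target) 84))
    (fun _ _ => .leaf 0) (Nat.land M (Nat.shiftLeft conflicts c))

/-- The node of the three tries below a left, straight and right turn. -/
noncomputable def conflictNode (ih : Dir → ℕ → ℕ → Trie) (dl ds dr : Dir) (M c : ℕ) : Trie :=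
  Trie.mkNode (conflictBranch ih dl dl.turnConflicts dl.turnMarks M c)
    (conflictBranch ih ds ds.straightConflicts ds.straightMarks M c)
    (conflictBranch ih dr dr.turnConflicts dr.turnMarks M c)

/-- The board positions from which `k + 1` steps can lead back to the start, as a bit set. -/
noncomputable def returnBall (k : ℕ) : ℕ :=
  (Nat.succ k).rec (Nat.shiftLeft 1 1356) fun _ b =>
    Nat.lor b (Nat.lor (Nat.lor (Nat.shiftLeft b 4) (Nat.shiftRight b 4))
      (Nat.lor (Nat.shiftLeft b 80) (Nat.shiftRight b 80)))

/-- The next `k` turns of a walker with heading `d`, board `M` and position `c`: words with a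
conflict get the value `0`, the others `1`. A walker that cannot return to the start is followed no
further, for then the rest of its path hardly restricts the turns that can be put in front of the
word. -/
noncomputable def conflictTrie (k : ℕ) : Dir → ℕ → ℕ → Trie :=
  k.rec (fun _ _ _ => .leaf 1) fun k ih d M c =>
    Nat.rec (.leaf 1) (fun _ _ => Dir.fork (conflictNode ih) d M c)
      (Nat.land 1 (Nat.shiftRight (returnBall k) c))

/-- The analogue of `conflictTrie` for a walker that has gone straight east so far. A first turn to
the right gets the value `0`, since it does not occur in oriented words. -/
noncomputable def orientedConflictTrie (k : ℕ) : ℕ → ℕ → Trie :=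
  k.rec (fun _ _ => .leaf 1) fun k ih M c =>
    Nat.rec (.leaf 1) (fun _ _ => Trie.mkNode
        (conflictTrie k .n (Nat.lor M (Nat.shiftLeft (Dir.turnMarks .n) c))
          (Nat.sub (Nat.add c (Dir.target .n)) 84))
        (ih (Nat.lor M (Nat.shiftLeft (Dir.straightMarks .e) c))
          (Nat.sub (Nat.add c (Dir.target .e)) 84))
        (.leaf 0))
      (Nat.land 1 (Nat.shiftRight (returnBall k) c))

/-- The conflict trie of the first 16 turns of oriented words. -/
noncomputable def historyTrie : Trie :=
  orientedConflictTrie 16 (Nat.shiftLeft (Dir.turnMarks .e) 1356) 1360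

/-- The four kinds of marks on the board. -/
inductive Plane | visited | east | north | straight

/-- Index of a mark among the four bits of a cell. -/
def Plane.code : Plane → ℕ
  | visited => 0
  | east => 1
  | north => 2
  | straight => 3

/-- What a mark in a plane asserts about the cell `P`: the steps of `z` before time `n` leave `P`,
use the edge from `P` in direction `δ` or `i * δ`, or pass straight through `P`. -/
def Plane.Holds (z : ℕ → GaussianInt) (δ : GaussianInt) (n : ℕ) (P : GaussianInt) : Plane → Prop
  | visited => ∃ i < n, z i = P
  | east => ∃ i < n, s(z i, z (i + 1)) = s(P, P + δ)
  | north => ∃ i < n, s(z i, z (i + 1)) = s(P, P + ⟨0, 1⟩ * δ)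
  | straight => ∃ i < n, 0 < i ∧ z i = P ∧ z (i + 1) - z i = z i - z (i - 1)

/-- Index, relative to the walker, of the bit for a plane at the cell with offset `g`. -/
def bitIndex (g : GaussianInt) (p : Plane) : ℤ := 84 + 4 * (g.re + 20 * g.im) + p.code

/-- Every mark on the board `M` is an event of `z` before time `n`, seen from a walker at `z n`
with board position `c` when the lattice is turned so that `δ` points east. -/
def BoardSound (z : ℕ → GaussianInt) (δ : GaussianInt) (n M c : ℕ) : Prop :=
  ∀ b, M.testBit b → ∃ g p, g.re.natAbs + g.im.natAbs ≤ n ∧ (b : ℤ) = c + bitIndex g p ∧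
    p.Holds z δ n (z n + g * δ)

variable {z : ℕ → GaussianInt} {δ P : GaussianInt} {d : Dir} {j k n M c : ℕ} {w : List Turn}

lemma Plane.Holds.mono {p : Plane} (h : p.Holds z δ j P) (hjn : j ≤ n) : p.Holds z δ n P := by
  cases p <;> exact Exists.imp (fun _ => And.imp_left fun hi => lt_of_lt_of_le hi hjn) h

lemma Dir.target_cast (d : Dir) : (d.target : ℤ) = bitIndex d.unit .visited := by
  cases d <;> rfl

lemma Dir.exists_edge_eq (d : Dir) (z : ℕ → GaussianInt) (δ P : GaussianInt) (n : ℕ) :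
    ∃ g p, g.re.natAbs + g.im.natAbs ≤ 1 ∧ (d.edge : ℤ) = bitIndex g p ∧
      (p.Holds z δ n (P + g * δ) ↔ ∃ i < n, s(z i, z (i + 1)) = s(P, P + d.unit * δ)) := by
  have backward (u : GaussianInt) : s(P - u, P - u + u) = s(P, P - u) := by
    rw [sub_add_cancel, Sym2.eq_swap]
  cases d with
  | e => exact ⟨0, .east, by decide, rfl, by simp [Plane.Holds, unit]⟩
  | n => exact ⟨0, .north, by decide, rfl, by simp [Plane.Holds, unit]⟩
  | w =>
    refine ⟨-1, .east, by decide, rfl, ?_⟩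
    rw [Plane.Holds, unit, neg_one_mul, ← sub_eq_add_neg, backward]
  | s =>
    refine ⟨⟨0, -1⟩, .north, by decide, rfl, ?_⟩
    rw [Plane.Holds, unit, show (⟨0, -1⟩ : GaussianInt) = -⟨0, 1⟩ from rfl, neg_mul,
      ← sub_eq_add_neg, backward]

lemma BoardSound.holds {g : GaussianInt} {p : Plane} {q : ℕ} (h : BoardSound z δ n M c)
    (hn : n ≤ 17) (hg : g.re.natAbs + g.im.natAbs ≤ 1) (hq : (q : ℤ) = bitIndex g p)
    (hM : M.testBit (c + q)) : p.Holds z δ n (z n + g * δ) := by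
  obtain ⟨g', p', hg', hb, holds⟩ := h _ hM
  have code_lt (p : Plane) : p.code < 4 := by cases p <;> decide
  have code_lt_p := code_lt p
  have code_lt_p' := code_lt p'
  rw [bitIndex] at hq hb
  push_cast at hb
  obtain rfl : g' = g := Zsqrtd.ext (by omega) (by omega)
  obtain rfl : p' = p := by
    have code_eq : p'.code = p.code := by omega
    cases p <;> cases p' <;> first | rfl | exact absurd code_eq (by decide)
  exact holds

lemma BoardSound.move {marks : ℕ} (h : BoardSound z δ n M c) (hc : 80 ≤ c)
    (step : z (n + 1) - z n = d.unit * δ)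
    (hmarks : ∀ q, marks.testBit q → ∃ g p, g.re.natAbs + g.im.natAbs ≤ n ∧
      (q : ℤ) = bitIndex g p ∧ p.Holds z δ (n + 1) (z n + g * δ)) :
    BoardSound z δ (n + 1) (Nat.lor M (Nat.shiftLeft marks c))
      (Nat.sub (Nat.add c d.target) 84) := by
  intro b hb
  obtain ⟨g, p, hg, hbg, holds⟩ : ∃ g p, g.re.natAbs + g.im.natAbs ≤ n ∧
      (b : ℤ) = c + bitIndex g p ∧ p.Holds z δ (n + 1) (z n + g * δ) := by
    have hb' : (M ||| marks <<< c).testBit b := hb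
    simp only [Nat.testBit_or, Nat.testBit_shiftLeft, Bool.or_eq_true, Bool.and_eq_true,
      decide_eq_true_eq] at hb'
    rcases hb' with hb | ⟨hcb, hb⟩
    · obtain ⟨g, p, hg, hbg, holds⟩ := h b hb
      exact ⟨g, p, hg, hbg, holds.mono n.le_succ⟩
    · obtain ⟨g, p, hg, hbg, holds⟩ := hmarks _ hb
      exact ⟨g, p, hg, by omega, holds⟩
  have unit_bound : d.unit.re.natAbs + d.unit.im.natAbs = 1 := by cases d <;> rfl
  have target_eq := d.target_cast
  refine ⟨g - d.unit, p, ?_, ?_, ?_⟩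
  · rw [Zsqrtd.re_sub, Zsqrtd.im_sub]
    omega
  · change _ = ((c + d.target - 84 : ℕ) : ℤ) + _
    simp only [bitIndex, Plane.code, Zsqrtd.re_sub, Zsqrtd.im_sub] at target_eq hbg ⊢
    omega
  · convert holds using 1
    linear_combination step

lemma land_shiftLeft_eq_zero {conflicts : ℕ} (h : ∀ q, conflicts.testBit q → ¬M.testBit (c + q)) :
    Nat.land M (Nat.shiftLeft conflicts c) = 0 := by
  refine Nat.zero_of_testBit_eq_false fun b => ?_
  change (M &&& conflicts <<< c).testBit b = false
  rw [Nat.testBit_and, Nat.testBit_shiftLeft]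
  by_contra hb
  simp only [Bool.not_eq_false, Bool.and_eq_true, decide_eq_true_eq] at hb
  exact h _ hb.2.2 (by rw [Nat.add_sub_cancel' hb.2.1]; exact hb.1)

lemma testBit_lor_two_pow_iff {a b q : ℕ} :
    (Nat.lor a (Nat.pow 2 b)).testBit q ↔ a.testBit q ∨ b = q := by
  change (a ||| 2 ^ b).testBit q ↔ _
  rw [Nat.testBit_or, Nat.testBit_two_pow, Bool.or_eq_true, decide_eq_true_eq]

lemma testBit_two_pow_iff {b q : ℕ} : (Nat.pow 2 b).testBit q ↔ b = q := by
  change (2 ^ b).testBit q ↔ _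
  rw [Nat.testBit_two_pow, decide_eq_true_eq]

lemma turnConflicts_free (hz : Osculating k z) (hnk : n < k) (hn : n ≤ 17)
    (step : z (n + 1) - z n = d.unit * δ) (h : BoardSound z δ n M c) :
    ∀ q, d.turnConflicts.testBit q → ¬M.testBit (c + q) := by
  intro q hq hM
  rw [Dir.turnConflicts, testBit_lor_two_pow_iff, testBit_two_pow_iff] at hq
  rcases hq with rfl | rfl
  · obtain ⟨g, p, hg, edge_eq, holds_iff⟩ := d.exists_edge_eq z δ (z n) n
    obtain ⟨i, hi, heq⟩ := holds_iff.mp (h.holds hn hg edge_eq hM)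
    rw [← step, add_sub_cancel] at heq
    exact hz.edge_ne hi hnk heq
  · have bit_eq : ((d.target + 3 : ℕ) : ℤ) = bitIndex d.unit .straight := by
      rw [Nat.cast_add, d.target_cast, bitIndex, bitIndex, Plane.code, Plane.code, Nat.cast_zero,
        add_zero]
    obtain ⟨i, hi, hi0, heq, straight⟩ := h.holds hn (by cases d <;> decide) bit_eq hM
    rw [← step, add_sub_cancel] at heq
    have := hz.eq_of_straight hi0 (by omega) straight hnk heq.symm
    omega

lemma straightConflicts_free (hz : Osculating k z) (hnk : n < k) (hn : n ≤ 17) (hn0 : 0 < n)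
    (step : z (n + 1) - z n = d.unit * δ) (straight : z (n + 1) - z n = z n - z (n - 1))
    (h : BoardSound z δ n M c) : ∀ q, d.straightConflicts.testBit q → ¬M.testBit (c + q) := by
  intro q hq hM
  rw [Dir.straightConflicts, testBit_lor_two_pow_iff] at hq
  rcases hq with hq | rfl
  · exact turnConflicts_free hz hnk hn step h q hq hM
  · obtain ⟨i, hi, heq⟩ := h.holds (g := 0) (p := .visited) hn (by decide) rfl hM
    rw [zero_mul, add_zero] at heq
    exact hi.ne (hz.eq_of_straight hn0 hnk straight (by omega) heq)

lemma turnMarks_sound (hn0 : 0 < n) (step : z (n + 1) - z n = d.unit * δ) :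
    ∀ q, d.turnMarks.testBit q → ∃ g p, g.re.natAbs + g.im.natAbs ≤ n ∧
      (q : ℤ) = bitIndex g p ∧ p.Holds z δ (n + 1) (z n + g * δ) := by
  intro q hq
  rw [Dir.turnMarks, testBit_lor_two_pow_iff, testBit_two_pow_iff] at hq
  rcases hq with rfl | rfl
  · obtain ⟨g, p, hg, edge_eq, holds_iff⟩ := d.exists_edge_eq z δ (z n) (n + 1)
    refine ⟨g, p, hg.trans hn0, edge_eq, holds_iff.mpr ⟨n, n.lt_add_one, ?_⟩⟩
    rw [← step, add_sub_cancel]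
  · exact ⟨0, .visited, by simp, rfl, n, n.lt_add_one, by simp⟩

lemma straightMarks_sound (hn0 : 0 < n) (step : z (n + 1) - z n = d.unit * δ)
    (straight : z (n + 1) - z n = z n - z (n - 1)) :
    ∀ q, d.straightMarks.testBit q → ∃ g p, g.re.natAbs + g.im.natAbs ≤ n ∧
      (q : ℤ) = bitIndex g p ∧ p.Holds z δ (n + 1) (z n + g * δ) := by
  intro q hq
  rw [Dir.straightMarks, testBit_lor_two_pow_iff] at hq
  rcases hq with hq | rfl
  · exact turnMarks_sound hn0 step q hq
  · exact ⟨0, .straight, by simp, rfl, n, n.lt_add_one, hn0, by simp, straight⟩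

lemma Dir.fork_eq (f : Dir → Dir → Dir → ℕ → ℕ → Trie) (d : Dir) :
    d.fork f = f (d.turn .left) (d.turn .straight) (d.turn .right) := by
  cases d <;> rfl

lemma conflictTrie_succ_eq_or (k : ℕ) (d : Dir) (M c : ℕ) :
    conflictTrie (k + 1) d M c = .leaf 1 ∨ conflictTrie (k + 1) d M c =
      conflictNode (conflictTrie k) (d.turn .left) (d.turn .straight) (d.turn .right) M c := by
  rw [← Dir.fork_eq (conflictNode (conflictTrie k)) d]
  exact natRec_eq_or ..

lemma conflictBranch_eq_of_free {ih : Dir → ℕ → ℕ → Trie} {conflicts marks : ℕ}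
    (h : ∀ q, conflicts.testBit q → ¬M.testBit (c + q)) :
    conflictBranch ih d conflicts marks M c =
      ih d (Nat.lor M (Nat.shiftLeft marks c)) (Nat.sub (Nat.add c d.target) 84) := by
  rw [conflictBranch, land_shiftLeft_eq_zero h]
  rfl

lemma orientedConflictTrie_succ_eq_or (k M c : ℕ) :
    orientedConflictTrie (k + 1) M c = .leaf 1 ∨ orientedConflictTrie (k + 1) M c =
      .node (conflictTrie k .n (Nat.lor M (Nat.shiftLeft (Dir.turnMarks .n) c))
          (Nat.sub (Nat.add c (Dir.target .n)) 84))
        (orientedConflictTrie k (Nat.lor M (Nat.shiftLeft (Dir.straightMarks .e) c))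
          (Nat.sub (Nat.add c (Dir.target .e)) 84))
        (.leaf 0) := by
  rw [← Trie.mkNode_eq]
  exact natRec_eq_or ..

/-- The situation of a walker at `z n` that came with heading `d` and still has `k` turns to make,
spelled by the front of `w`. -/
structure Walking (z : ℕ → GaussianInt) (δ : GaussianInt) (n k : ℕ) (d : Dir) (M c : ℕ)
    (w : List Turn) : Prop where
  follows : Follows z n w
  osculating : Osculating (n + 1 + w.length) z
  step : z (n + 1) - z n = d.unit * δ
  board : BoardSound z δ (n + 1) M c
  le_length : k ≤ w.length
  time_add_le : n + 1 + k ≤ 17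
  le_position : 80 * k ≤ c

namespace Walking

variable {t : Turn}

lemma next_step (h : Walking z δ n k d M c (t :: w)) :
    z (n + 1 + 1) - z (n + 1) = (d.turn t).unit * δ := by
  rw [Dir.unit_turn, mul_assoc, ← h.step]
  exact h.follows.head

lemma straight (h : Walking z δ n k d M c (.straight :: w)) :
    z (n + 1 + 1) - z (n + 1) = z (n + 1) - z n :=
  h.follows.head.trans (one_mul _)

lemma move {marks : ℕ} (h : Walking z δ n (k + 1) d M c (t :: w))
    (hmarks : ∀ q, marks.testBit q → ∃ g p, g.re.natAbs + g.im.natAbs ≤ n + 1 ∧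
      (q : ℤ) = bitIndex g p ∧ p.Holds z δ (n + 1 + 1) (z (n + 1) + g * δ)) :
    Walking z δ (n + 1) k (d.turn t) (Nat.lor M (Nat.shiftLeft marks c))
      (Nat.sub (Nat.add c (d.turn t).target) 84) w where
  follows := h.follows.tail
  osculating := by simpa only [List.length_cons, add_assoc, add_comm 1] using h.osculating
  step := h.next_step
  board := h.board.move (by have := h.le_position; omega) h.next_step hmarks
  le_length := by simpa using h.le_length
  time_add_le := by have := h.time_add_le; omega
  le_position := by
    have position := h.le_position
    have target_ge : 4 ≤ (d.turn t).target := by cases d.turn t <;> decide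
    change _ ≤ c + (d.turn t).target - 84
    omega

lemma conflictTrie_ne_zero (h : Walking z δ n k d M c w) :
    (conflictTrie k d M c).eval w ≠ 0 := by
  induction k generalizing n d M c w with
  | zero =>
    rw [show conflictTrie 0 d M c = .leaf 1 from rfl, Trie.eval_leaf]
    exact one_ne_zero
  | succ k ih =>
    obtain leaf_eq | node_eq := conflictTrie_succ_eq_or k d M c
    · rw [leaf_eq, Trie.eval_leaf]
      exact one_ne_zero
    · rw [node_eq, conflictNode, Trie.mkNode_eq]
      rcases w with _ | ⟨t, w⟩
      · exact absurd h.le_length (by simp)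
      have hn := h.time_add_le
      have free := turnConflicts_free h.osculating (by simp) (by omega) h.next_step h.board
      have marks := turnMarks_sound n.succ_pos h.next_step
      cases t with
      | left =>
        rw [Trie.eval, Trie.child, conflictBranch_eq_of_free free]
        exact ih (h.move marks)
      | right =>
        rw [Trie.eval, Trie.child, conflictBranch_eq_of_free free]
        exact ih (h.move marks)
      | straight =>
        rw [Trie.eval, Trie.child, conflictBranch_eq_of_free
          (straightConflicts_free h.osculating (by simp) (by omega) n.succ_pos h.next_step
            h.straight h.board)]
        exact ih (h.move (straightMarks_sound n.succ_pos h.next_step h.straight))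

lemma orientedConflictTrie_ne_zero (h : Walking z δ n k .e M c (orient w)) :
    (orientedConflictTrie k M c).eval (orient w) ≠ 0 := by
  induction k generalizing n M c w with
  | zero =>
    rw [show orientedConflictTrie 0 M c = .leaf 1 from rfl, Trie.eval_leaf]
    exact one_ne_zero
  | succ k ih =>
    obtain leaf_eq | node_eq := orientedConflictTrie_succ_eq_or k M c
    · rw [leaf_eq, Trie.eval_leaf]
      exact one_ne_zero
    · rw [node_eq]
      match w, h with
      | [], h => exact absurd h.le_length (by simp [orient])
      | .left :: w, h | .right :: w, h =>
        exact (h.move (turnMarks_sound n.succ_pos h.next_step)).conflictTrie_ne_zero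
      | .straight :: w, h =>
        exact ih (h.move (straightMarks_sound n.succ_pos h.next_step h.straight))

end Walking

theorem historyTrie_ne_zero (h : orient w ∈ osculatingWords) (hw : 16 ≤ (orient w).length) :
    historyTrie.eval (orient w) ≠ 0 := by
  obtain ⟨z, follows, osculating⟩ := h
  refine Walking.orientedConflictTrie_ne_zero (z := z) (δ := z 1 - z 0) (n := 0) ⟨follows,
    by rwa [zero_add, add_comm], (one_mul _).symm, fun b hb => ?_, hw, le_rfl, by decide⟩
  change (Dir.turnMarks .e <<< 1356).testBit b = true at hb
  rw [Nat.testBit_shiftLeft, Bool.and_eq_true, decide_eq_true_eq, Dir.turnMarks,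
    testBit_lor_two_pow_iff, testBit_two_pow_iff, show Dir.edge .e = 85 from rfl] at hb
  obtain rfl | rfl : b = 1441 ∨ b = 1440 := by omega
  · exact ⟨-1, .east, by decide, rfl, 0, one_pos, by congr 2 <;> ring⟩
  · exact ⟨-1, .visited, by decide, rfl, 0, one_pos, by ring⟩

end Conflicts

section PowerIteration

/-!
### The weight

Nothing about the weight is used except the final inequality, so that carries between the fields of
a block are harmless as long as they do not spoil it. A block is a number that holds one field of
16 bits for each word of 6 turns, above a salt of 64 bits. The layout is given by the strides `σs`
of the 6 turns: a turn with stride `σ` moves the field by `0`, `σ` or `2 * σ` bits if it is to the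
left, straight or to the right. An iteration drops the last turn of the words and reuses its stride.
-/

/-- The block with all fields equal to `1`. -/
noncomputable def blockOnes : ℕ :=
  Nat.shiftLeft (Nat.div (Nat.sub (Nat.pow 2 11664) 1) 65535) 64

/-- Selects the fields with a left turn at stride `σ`, cut to `16 - sh` bits. -/
noncomputable def blockSelector (σ sh : ℕ) : ℕ :=
  Nat.shiftLeft (Nat.mul (Nat.div (Nat.sub (Nat.pow 2 σ) 1) 65535)
    (Nat.mul (Nat.shiftRight 65535 sh)
      (Nat.div (Nat.sub (Nat.pow 2 11664) 1) (Nat.sub (Nat.pow 2 (Nat.mul 3 σ)) 1)))) 64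

/-- Factor that copies these fields to the two other turns at stride `σ`. -/
noncomputable def blockSpreader (σ : ℕ) : ℕ :=
  Nat.add 1 (Nat.add (Nat.pow 2 σ) (Nat.pow 2 (Nat.add σ σ)))

namespace Trie

/-- The trie read in the mirror. -/
noncomputable def mirror (t : Trie) : Trie := t.rec leaf fun _ _ _ l s r => mkNode r s l

/-- Extends a trie from oriented words to their mirror images. -/
noncomputable def symmetrize (t : Trie) : Trie :=
  t.rec leaf fun l _ _ _ s _ => mkNode l s l.mirror

/-- A leaf for the block `n`, whose low 64 bits are zero, with a checksum in these bits. The kernel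
hashes a numeral by its low bits only, so that its caches would degenerate without this salt. -/
noncomputable def salted (n : ℕ) : Trie := leaf (Nat.add n (Nat.mod n 2305843009213693951))

/-- The block that has all bits set in the fields of the words with nonzero value in `t`. -/
noncomputable def mask (t : Trie) : List ℕ → ℕ :=
  t.rec
    (fun n σs => Nat.rec 0 (fun _ _ => σs.rec (Nat.shiftLeft 65535 64) fun σ _ m =>
      Nat.add m (Nat.add (Nat.shiftLeft m σ) (Nat.shiftLeft m (Nat.add σ σ)))) n)
    fun _ _ _ l s r σs => σs.rec 0 fun σ σs _ =>
      Nat.lor (l σs) (Nat.lor (Nat.shiftLeft (s σs) σ) (Nat.shiftLeft (r σs) (Nat.add σ σ)))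

/-- Replaces everything below depth `k` by masks. -/
noncomputable def pack (σs : List ℕ) (t : Trie) : ℕ → Trie :=
  t.rec (fun n _ => salted ((leaf n).mask σs)) fun l s r ihl ihs ihr k =>
    k.rec (salted ((node l s r).mask σs)) fun k _ => mkNode (ihl k) (ihs k) (ihr k)

/-- The block in a leaf. -/
noncomputable def block (t : Trie) : ℕ := t.rec (fun n => n) fun _ _ _ _ _ _ => 0

/-- The weight `fun w => (∑ t, x (t :: w)) / 2 ^ sh + 8` on the words allowed by `D`. The last turn
of `w` above the blocks of `D` is found at stride `σ` in the blocks of `x`; it determines the offset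
`o` of the fields to read. -/
noncomputable def prependSum (σ sh : ℕ) (D x : Trie) : Trie :=
  D.rec (motive := fun _ => ℕ → Trie → Trie → Trie → Trie)
    (fun m o x y z => salted <| Nat.land m <| Nat.add (Nat.mul 8 blockOnes) <|
      Nat.mul (Nat.land (Nat.shiftRight (Nat.add (Nat.add x.block y.block) z.block) (Nat.add o sh))
        (blockSelector σ sh)) (blockSpreader σ))
    (fun _ _ _ l s r _ x y z => x.split fun xl xs xr => y.split fun yl ys yr =>
      z.split fun zl zs zr => mkNode (l 0 xl yl zl) (s σ xs ys zs) (r (Nat.add σ σ) xr yr zr))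
    0 (x.child .left) (x.child .straight) (x.child .right)

/-- One step of the power iteration, into the layout `σs`. -/
noncomputable def sweep (σ sh : ℕ) (σs : List ℕ) (x : Trie) : Trie :=
  prependSum σ sh (pack σs historyTrie.symmetrize 10) x

/-- A cycle of sweeps that returns to the original layout. It divides by `2 ^ (3 / 2)` per sweep on
average, slightly more than the weight grows; the constant `8` in `prependSum` makes up for this. -/
noncomputable def sixSweeps (x : Trie) : Trie :=
  sweep 3888 2 [16, 48, 144, 432, 1296, 3888] <|
  sweep 1296 1 [3888, 16, 48, 144, 432, 1296] <|
  sweep 432 2 [1296, 3888, 16, 48, 144, 432] <|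
  sweep 144 1 [432, 1296, 3888, 16, 48, 144] <|
  sweep 48 2 [144, 432, 1296, 3888, 16, 48] <|
  sweep 16 1 [48, 144, 432, 1296, 3888, 16] x

/-- The weight in the packed trie `x` on the words with nonzero value in `t`, as a trie without
blocks. The stride of the turns above the blocks is `0`, and `o` is the offset of the field to
read. -/
noncomputable def unpack (t : Trie) : List ℕ → ℕ → Trie → Trie :=
  t.rec
    (fun n _ o x => Nat.rec (leaf 0)
      (fun _ _ => mkLeaf (Nat.land (Nat.shiftRight x.block (Nat.add o 64)) 65535)) n)
    fun _ _ _ l s r σs o x => σs.rec (leaf 0) fun σ σs _ => x.split fun xl xs xr =>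
      mkNode (l σs o xl) (s σs (Nat.add σ o) xs) (r σs (Nat.add σ (Nat.add σ o)) xr)

end Trie

/-- The weight of oriented words. The number of sweeps and the initial value, which has to keep the
fields below 16 bits, were found by experiment. -/
noncomputable def weightTrie : Trie :=
  historyTrie.unpack [0, 0, 0, 0, 0, 0, 0, 0, 0, 0, 16, 48, 144, 432, 1296, 3888] 0 <|
    .sixSweeps <| .sixSweeps <| .sixSweeps <| .leaf (Nat.mul 10916 blockOnes)

set_option maxRecDepth 100000 in
lemma growthCheck_weightTrie : historyTrie.growthCheck weightTrie (weightTrie.child .left)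
    (weightTrie.child .straight) (weightTrie.child .left) = true := by
  decide +kernel

end PowerIteration

section UpperBound

/-- The superharmonic weight of a turn word, which depends on its first 16 turns only up to
mirroring. -/
noncomputable def wordWeight (w : List Turn) : ℝ := weightTrie.eval (orient w)

variable {w : List Turn}

lemma sum_wordWeight_cons_lt (hw : w ∈ osculatingWords) (hlen : 16 ≤ w.length) :
    ∑ t, wordWeight (t :: w) < 2.73911 * wordWeight w := by
  obtain ⟨orient_mem, orient_length⟩ :
      orient w ∈ osculatingWords ∧ (orient w).length = w.length := by
    rcases orient_eq_or w with h | h <;> rw [h]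
    exacts [⟨hw, rfl⟩, ⟨map_mirror_mem_osculatingWords hw, List.length_map _⟩]
  have growth := Trie.lt_of_growthCheck growthCheck_weightTrie
    (historyTrie_ne_zero orient_mem (orient_length ▸ hlen))
  rw [← sum_eval_orient_cons] at growth
  have growth_cast : (∑ t, wordWeight (t :: w)) * 100000 < wordWeight w * 273911 := by
    unfold wordWeight
    exact_mod_cast growth
  linarith

lemma one_le_wordWeight (hw : w ∈ osculatingWords) (hlen : 16 ≤ w.length) : 1 ≤ wordWeight w := by
  have sum_nonneg : 0 ≤ ∑ t, wordWeight (t :: w) := Finset.sum_nonneg fun _ _ => Nat.cast_nonneg _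
  have weight_pos : 0 < wordWeight w := by linarith [sum_wordWeight_cons_lt hw hlen]
  exact Nat.one_le_cast.mpr (Nat.cast_pos.mp weight_pos)

lemma exists_card_osculatingWords_le :
    ∃ C > 0, ∀ n ≥ 16, (Nat.card {u : Fin n → Turn // List.ofFn u ∈ osculatingWords} : ℝ) ≤
      C * 2.73911 ^ n :=
  exists_card_le_mul_pow (by norm_num) (fun _ _ => tail_mem_osculatingWords)
    (fun _ => one_le_wordWeight) fun w hw hlen =>
    calc ∑ t, osculatingWords.indicator wordWeight (t :: w) ≤ ∑ t, wordWeight (t :: w) :=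
          Finset.sum_le_sum fun t _ =>
            Set.indicator_le_self' (fun _ _ => Nat.cast_nonneg _) (t :: w)
      _ ≤ 2.73911 * wordWeight w := (sum_wordWeight_cons_lt hw hlen).le

end UpperBound

theorem sow_connective_constant_upper_bound :
    limsup (fun n : ℕ => (sowCount n : ℝ) ^ (1 / (n : ℝ))) atTop ≤ 2.73911 := by
  obtain ⟨C, hC, words_le⟩ := exists_card_osculatingWords_le
  refine limsup_rpow_one_div_le (C := 4 * C) (fun _ => Nat.cast_nonneg _) (by positivity)
    (by norm_num) ?_
  filter_upwards [eventually_ge_atTop 17] with n hn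
  obtain ⟨n, rfl⟩ := Nat.exists_eq_succ_of_ne_zero (by omega : n ≠ 0)
  calc (sowCount (n + 1) : ℝ)
      ≤ 4 * Nat.card {u : Fin n → Turn // List.ofFn u ∈ osculatingWords} :=
        mod_cast sowCount_succ_le n
    _ ≤ 4 * (C * 2.73911 ^ n) := by gcongr; exact words_le n (by omega)
    _ ≤ 4 * C * 2.73911 ^ (n + 1) := by
        rw [← mul_assoc]
        gcongr <;> norm_num
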